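/- Let n ≥ 2 and s ∈ (0,1). For every u in the Schwartz class on ℝⁿ, one has the endpoint Hardy-type inequality ∫_{ℝⁿ} |x|^{−s} |u(x)| dx ≤ C · ∫_{ℝⁿ}∫_{ℝⁿ} |u(x) − u(y)| / |x−y|^{n+s} dy dx, with a constant C depending only on n and s. -/

import Mathlib

open MeasureTheory Real Set

/-!
Compare `u x` with the values `u y` for `y` in the ball `B` of centre `2 t x` and radius `t ‖x‖`,
where `t` is large: there `‖y‖` and `‖x - y‖` are at most `3 t ‖x‖`, while the measure of `B` is
proportional to `(t ‖x‖) ^ d`. Averaging over `B` and integrating in `x` bounds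
`t ^ d ∫ ‖u‖ / ‖x‖ ^ s` by a multiple of `t ^ (d + s)` times the Gagliardo seminorm plus a multiple
of `t ^ s ∫ ‖u‖ / ‖x‖ ^ s`, and the last term is absorbed because `s < d`. As `B` points outward,
the comparison stays inside `‖x‖ > ε`, where the absorbed integral is finite for integrable `u`;
then let `ε → 0`.

For Schwartz `u` the seminorm is finite because the `L¹` norm of `u (· + h) - u` is
`O(min (‖h‖, 1))` and `0 < s < 1`.
-/

open Metric Module Filter Topology
open scoped ENNReal NNReal SchwartzMap

lemma div_rpow_le_mul_div_rpow {a b c w : ℝ≥0∞} {p : ℝ} (hp : 0 ≤ p) (hc₀ : c ≠ 0) (hc : c ≠ ∞)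
    (h : a ≤ c * b) : w / b ^ p ≤ c ^ p * (w / a ^ p) :=
  calc w / b ^ p = c ^ p * (w / (c * b) ^ p) := by
        rw [ENNReal.mul_rpow_of_nonneg _ _ hp, ← mul_div_assoc, ENNReal.mul_div_mul_left _ _
          (by simp [ENNReal.rpow_eq_zero_iff, hc₀, hc]) (ENNReal.rpow_ne_top_of_nonneg hp hc)]
    _ ≤ c ^ p * (w / a ^ p) := by gcongr

lemma le_two_mul_of_le_add_half {a b : ℝ≥0∞} (ha : a ≠ ∞) (h : a ≤ b + a / 2) : a ≤ 2 * b := by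
  have half_le : a / 2 ≤ b := by
    refine ENNReal.le_of_add_le_add_right (ENNReal.div_ne_top ha two_ne_zero) ?_
    rwa [ENNReal.add_halves]
  rw [mul_comm]
  exact (ENNReal.div_le_iff two_ne_zero ENNReal.ofNat_ne_top).1 half_le

lemma exists_one_le_mul_rpow_le_half {a b : ℝ} (c : ℝ) (hab : a < b) :
    ∃ t : ℝ, 1 ≤ t ∧ c * t ^ a ≤ t ^ b / 2 := by
  have large : ∀ᶠ t : ℝ in atTop, 2 * c ≤ t ^ (b - a) :=
    (tendsto_rpow_atTop (sub_pos.2 hab)).eventually_ge_atTop _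
  obtain ⟨t, ht, ht₁⟩ := (large.and (eventually_ge_atTop 1)).exists
  have split : t ^ b = t ^ (b - a) * t ^ a := by
    rw [← Real.rpow_add (by positivity), sub_add_cancel]
  refine ⟨t, ht₁, ?_⟩
  rw [split, mul_div_right_comm]
  gcongr
  linarith

lemma exists_one_le_ofReal_rpow_mul_le_half {d : ℕ} {s : ℝ} (hsd : s < d) :
    ∃ t : ℝ, 1 ≤ t ∧ ENNReal.ofReal (3 * t) ^ (d + s) * ENNReal.ofReal t⁻¹ ^ d ≤
      ENNReal.ofReal t ^ d / 2 := by
  obtain ⟨t, ht, h⟩ := exists_one_le_mul_rpow_le_half (3 ^ (d + s)) hsd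
  have ht₀ : 0 < t := by linarith
  have rescale : (3 * t) ^ (d + s) * t⁻¹ ^ d = 3 ^ (d + s) * t ^ s := by
    rw [Real.mul_rpow (by norm_num) ht₀.le, Real.rpow_add ht₀, Real.rpow_natCast, inv_pow]
    field_simp
  refine ⟨t, ht, ?_⟩
  rw [ENNReal.ofReal_rpow_of_pos (by positivity), ← ENNReal.ofReal_pow (by positivity),
    ← ENNReal.ofReal_pow ht₀.le, ← ENNReal.ofReal_mul (by positivity), ← ENNReal.ofReal_ofNat,
    ← ENNReal.ofReal_div_of_pos two_pos, rescale]
  exact ENNReal.ofReal_le_ofReal (by rwa [← Real.rpow_natCast t d])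

lemma integrableOn_Ioi_min_one_div_rpow {p : ℝ} (hp₁ : 1 < p) (hp₂ : p < 2) :
    IntegrableOn (fun r : ℝ => min r 1 / r ^ p) (Ioi 0) := by
  rw [← Ioc_union_Ioi_eq_Ioi zero_le_one]
  refine IntegrableOn.union ?_ ?_
  · have near : IntegrableOn (fun r : ℝ => r ^ (1 - p)) (Ioc 0 1) :=
      (intervalIntegrable_iff_integrableOn_Ioc_of_le zero_le_one).1
        (intervalIntegral.intervalIntegrable_rpow' (by linarith))
    refine near.congr_fun (fun r hr => ?_) measurableSet_Ioc
    dsimp only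
    rw [min_eq_left hr.2, Real.rpow_sub hr.1, Real.rpow_one]
  · have far : IntegrableOn (fun r : ℝ => r ^ (-p)) (Ioi 1) :=
      integrableOn_Ioi_rpow_of_lt (by linarith) one_pos
    refine far.congr_fun (fun r hr => ?_) measurableSet_Ioi
    dsimp only
    rw [min_eq_right (mem_Ioi.1 hr).le, Real.rpow_neg (one_pos.trans hr).le, one_div]

lemma integral_le_mul_of_lintegral_enorm_le {α β : Type*} {_ : MeasurableSpace α}
    {_ : MeasurableSpace β} {μ : Measure α} {ν : Measure β} {f : α → ℝ} {g : β → ℝ} {C : ℝ≥0}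
    (hf : AEStronglyMeasurable f μ) (hg : Integrable g ν) (hf₀ : 0 ≤ f) (hg₀ : 0 ≤ g)
    (h : ∫⁻ x, ‖f x‖ₑ ∂μ ≤ C * ∫⁻ y, ‖g y‖ₑ ∂ν) :
    Integrable f μ ∧ ∫ x, f x ∂μ ≤ C * ∫ y, g y ∂ν := by
  have rhs_ne_top : C * ∫⁻ y, ‖g y‖ₑ ∂ν ≠ ∞ := ENNReal.mul_ne_top ENNReal.coe_ne_top hg.2.ne
  refine ⟨⟨hf, h.trans_lt rhs_ne_top.lt_top⟩, ?_⟩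
  have toReal_le := ENNReal.toReal_mono rhs_ne_top h
  rw [ENNReal.toReal_mul, ENNReal.coe_toReal, ← integral_norm_eq_lintegral_enorm hf,
    ← integral_norm_eq_lintegral_enorm hg.1] at toReal_le
  simpa only [Real.norm_of_nonneg (hf₀ _), Real.norm_of_nonneg (hg₀ _)] using toReal_le

section NormedGroup

variable {E F : Type*} [NormedAddCommGroup E] [NormedAddCommGroup F]

lemma enorm_le_ofReal_mul_enorm {x y : E} {c : ℝ} (hc : 0 ≤ c) (h : ‖y‖ ≤ c * ‖x‖) :
    ‖y‖ₑ ≤ ENNReal.ofReal c * ‖x‖ₑ := by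
  rw [← ofReal_norm, ← ofReal_norm, ← ENNReal.ofReal_mul hc]
  exact ENNReal.ofReal_le_ofReal h

lemma enorm_div_norm_rpow {a : ℝ} {z : E} (p : ℝ) (h : z = 0 → a = 0) :
    ‖a / ‖z‖ ^ p‖ₑ = ‖a‖ₑ / ‖z‖ₑ ^ p := by
  rcases eq_or_ne z 0 with rfl | hz
  · simp [h rfl]
  · have hz₀ : 0 < ‖z‖ := norm_pos_iff.2 hz
    rw [div_eq_mul_inv, enorm_mul, enorm_inv (by positivity),
      Real.enorm_of_nonneg (by positivity : 0 ≤ ‖z‖ ^ p), ← ENNReal.ofReal_rpow_of_pos hz₀,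
      ofReal_norm, div_eq_mul_inv]

variable [MeasurableSpace E] {μ : Measure E}

lemma lintegral_enorm_rpow_neg_mul_norm [NullSingletonClass μ] (u : E → F) (s : ℝ) :
    ∫⁻ x, ‖‖x‖ ^ (-s) * ‖u x‖‖ₑ ∂μ = ∫⁻ x, ‖u x‖ₑ / ‖x‖ₑ ^ s ∂μ := by
  refine lintegral_congr_ae ?_
  filter_upwards [Measure.ae_ne μ (0 : E)] with x hx
  rw [← enorm_norm (u x), ← enorm_div_norm_rpow s (absurd · hx), Real.rpow_neg (norm_nonneg x),
    mul_comm, div_eq_mul_inv]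

variable [BorelSpace E] {u : E → F}

lemma aemeasurable_enorm_div_enorm_rpow (hu : AEStronglyMeasurable u μ) (s : ℝ) :
    AEMeasurable (fun x => ‖u x‖ₑ / ‖x‖ₑ ^ s) μ :=
  hu.enorm.div (by fun_prop)

lemma setLIntegral_compl_closedBall_enorm_div_rpow_lt_top (hu : Integrable u μ) {s : ℝ} (hs : 0 ≤ s)
    {ε : ℝ} (hε : 0 < ε) : ∫⁻ x in (closedBall 0 ε)ᶜ, ‖u x‖ₑ / ‖x‖ₑ ^ s ∂μ < ∞ := by
  have hε' : ENNReal.ofReal ε ^ s ≠ 0 := by simp [ENNReal.rpow_eq_zero_iff, hε]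
  calc _ ≤ ∫⁻ x in (closedBall 0 ε)ᶜ, ‖u x‖ₑ / ENNReal.ofReal ε ^ s ∂μ := by
        refine setLIntegral_mono' measurableSet_closedBall.compl fun x hx => ?_
        gcongr
        rw [← ofReal_norm]
        exact ENNReal.ofReal_le_ofReal (not_le.1 (mem_closedBall_zero_iff.not.1 hx) |>.le)
    _ ≤ ∫⁻ x, ‖u x‖ₑ / ENNReal.ofReal ε ^ s ∂μ := setLIntegral_le_lintegral _ _
    _ = (∫⁻ x, ‖u x‖ₑ ∂μ) / ENNReal.ofReal ε ^ s := by
        simp only [div_eq_mul_inv]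
        rw [lintegral_mul_const'' _ hu.1.enorm]
    _ < ∞ := ENNReal.div_lt_top hu.2.ne hε'

lemma aecover_compl_closedBall [NullSingletonClass μ] :
    AECover μ (𝓝[>] 0) fun ε : ℝ => (closedBall (0 : E) ε)ᶜ where
  ae_eventually_mem := by
    have hne : ∀ᵐ x ∂μ, x ≠ 0 := Measure.ae_ne μ 0
    filter_upwards [hne] with x hx
    filter_upwards [Ioo_mem_nhdsGT (norm_pos_iff.2 hx)] with ε hε
    simpa using hε.2
  measurableSet _ := measurableSet_closedBall.compl

lemma aemeasurable_gagliardo_quotient [SecondCountableTopology E] [SFinite μ]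
    (hu : AEStronglyMeasurable u μ) (p : ℝ) :
    AEMeasurable (fun z : E × E => ‖u z.1 - u z.2‖ₑ / ‖z.1 - z.2‖ₑ ^ p) (μ.prod μ) :=
  (hu.comp_fst.sub hu.comp_snd).enorm.div (by fun_prop)

lemma lintegral_setLIntegral_norm_lt {ν : Measure E} [SFinite μ] [SFinite ν] {t : ℝ} (ht : 0 < t)
    {f : E → ℝ≥0∞} (hf : AEMeasurable f ν) :
    ∫⁻ x, ∫⁻ y in {y | t * ‖x‖ < ‖y‖}, f y ∂ν ∂μ = ∫⁻ y, f y * μ (ball 0 (t⁻¹ * ‖y‖)) ∂ν := by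
  set D := {p : E × E | t * ‖p.1‖ < ‖p.2‖}
  have hD : MeasurableSet D := measurableSet_lt (by fun_prop) (by fun_prop)
  have slice (y : E) : {x | t * ‖x‖ < ‖y‖} = ball (0 : E) (t⁻¹ * ‖y‖) := by
    ext x
    simp [lt_inv_mul_iff₀ ht]
  calc _ = ∫⁻ x, ∫⁻ y, D.indicator (fun p => f p.2) (x, y) ∂ν ∂μ := by
        refine lintegral_congr fun x => ?_
        rw [← lintegral_indicator (measurableSet_lt (by fun_prop) (by fun_prop))]
        rfl
    _ = ∫⁻ y, ∫⁻ x, {x | t * ‖x‖ < ‖y‖}.indicator (fun _ => f y) x ∂μ ∂ν :=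
        lintegral_lintegral_swap (hf.comp_snd.indicator hD)
    _ = _ := by
        refine lintegral_congr fun y => ?_
        rw [slice, lintegral_indicator_const measurableSet_ball]

end NormedGroup

section NormedSpace

variable {E F : Type*} [NormedAddCommGroup E] [NormedAddCommGroup F] [NormedSpace ℝ E]

lemma mul_norm_lt_norm_of_mem_ball {x y : E} {t : ℝ} (ht : 0 ≤ t)
    (hy : y ∈ ball ((2 * t) • x) (t * ‖x‖)) : t * ‖x‖ < ‖y‖ := by
  have hle := norm_sub_norm_le ((2 * t) • x) y
  rw [norm_smul, Real.norm_of_nonneg (by positivity)] at hle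
  linarith [mem_ball_iff_norm'.1 hy]

lemma norm_le_of_mem_ball {x y : E} {t : ℝ} (ht : 0 ≤ t)
    (hy : y ∈ ball ((2 * t) • x) (t * ‖x‖)) : ‖y‖ ≤ 3 * t * ‖x‖ := by
  have hle := norm_sub_norm_le y ((2 * t) • x)
  rw [norm_smul, Real.norm_of_nonneg (by positivity)] at hle
  linarith [mem_ball_iff_norm.1 hy]

lemma norm_sub_le_of_mem_ball {x y : E} {t : ℝ} (ht : 1 ≤ t)
    (hy : y ∈ ball ((2 * t) • x) (t * ‖x‖)) : ‖x - y‖ ≤ 3 * t * ‖x‖ := by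
  have split : ‖x - y‖ ≤ ‖(1 - 2 * t) • x‖ + ‖(2 * t) • x - y‖ := by
    have decomposition : x - y = (1 - 2 * t) • x + ((2 * t) • x - y) := by module
    exact decomposition ▸ norm_add_le _ _
  rw [norm_smul, Real.norm_of_nonpos (by linarith)] at split
  linarith [mem_ball_iff_norm'.1 hy, norm_nonneg x]

lemma enorm_div_rpow_le_of_mem_ball {u : E → F} {x y : E} {s t : ℝ} (hs : 0 ≤ s) (ht : 1 ≤ t)
    (hy : y ∈ ball ((2 * t) • x) (t * ‖x‖)) :
    ‖u x‖ₑ / ‖x‖ₑ ^ s ≤ ENNReal.ofReal (3 * t) ^ s *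
      (‖u x - u y‖ₑ / ‖x - y‖ₑ ^ s + ‖u y‖ₑ / ‖y‖ₑ ^ s) := by
  have ht₀ : 0 < 3 * t := by linarith
  have comparable {z : E} (hz : ‖z‖ ≤ 3 * t * ‖x‖) (w : ℝ≥0∞) :
      w / ‖x‖ₑ ^ s ≤ ENNReal.ofReal (3 * t) ^ s * (w / ‖z‖ₑ ^ s) :=
    div_rpow_le_mul_div_rpow hs (by simpa using ht₀) ENNReal.ofReal_ne_top
      (enorm_le_ofReal_mul_enorm ht₀.le hz)
  calc ‖u x‖ₑ / ‖x‖ₑ ^ s ≤ (‖u x - u y‖ₑ + ‖u y‖ₑ) / ‖x‖ₑ ^ s := by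
        gcongr
        simpa using enorm_add_le (u x - u y) (u y)
    _ = ‖u x - u y‖ₑ / ‖x‖ₑ ^ s + ‖u y‖ₑ / ‖x‖ₑ ^ s := ENNReal.add_div
    _ ≤ _ := by
        rw [mul_add]
        exact add_le_add (comparable (norm_sub_le_of_mem_ball ht hy) _)
          (comparable (norm_le_of_mem_ball (by linarith) hy) _)

end NormedSpace

section Gagliardo

variable {E F : Type*} [NormedAddCommGroup E] [NormedAddCommGroup F] [NormedSpace ℝ E]
  [MeasurableSpace E]

/-- The Gagliardo seminorm of the fractional Sobolev space `W^{s,1}`, with values in `ℝ≥0∞` so that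
it makes sense for every `u`. The diagonal does not contribute, since `0 / 0 = 0` in `ℝ≥0∞`. -/
noncomputable def eGagliardo (μ : Measure E) (s : ℝ) (u : E → F) : ℝ≥0∞ :=
  ∫⁻ x, ∫⁻ y, ‖u x - u y‖ₑ / ‖x - y‖ₑ ^ (finrank ℝ E + s) ∂μ ∂μ

variable [BorelSpace E] [FiniteDimensional ℝ E] {μ : Measure E} {u : E → F} {s t : ℝ}

lemma lintegral_enorm_gagliardo_quotient [SFinite μ] (hu : AEStronglyMeasurable u μ) :
    ∫⁻ z : E × E, ‖‖u z.1 - u z.2‖ / ‖z.1 - z.2‖ ^ (finrank ℝ E + s)‖ₑ ∂μ.prod μ =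
      eGagliardo μ s u := by
  rw [eGagliardo, ← lintegral_prod _ (aemeasurable_gagliardo_quotient hu _)]
  refine lintegral_congr fun z => ?_
  rw [enorm_div_norm_rpow _ fun hz => by simp [sub_eq_zero.1 hz], enorm_norm]

lemma integrable_gagliardo_quotient_iff [SFinite μ] (hu : AEStronglyMeasurable u μ) :
    Integrable (fun z : E × E => ‖u z.1 - u z.2‖ / ‖z.1 - z.2‖ ^ (finrank ℝ E + s)) (μ.prod μ) ↔
      eGagliardo μ s u < ∞ := by
  have denominator_meas : Measurable fun z : E × E => ‖z.1 - z.2‖ ^ (finrank ℝ E + s) := by fun_prop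
  have quotient_meas : AEStronglyMeasurable
      (fun z : E × E => ‖u z.1 - u z.2‖ / ‖z.1 - z.2‖ ^ (finrank ℝ E + s)) (μ.prod μ) :=
    (hu.comp_fst.sub hu.comp_snd).norm.div₀ denominator_meas.aestronglyMeasurable
  rw [← lintegral_enorm_gagliardo_quotient hu, Integrable, and_iff_right quotient_meas,
    HasFiniteIntegral]

variable [μ.IsAddHaarMeasure]

lemma addHaar_ball_mul_norm_div_rpow {x : E} (hx : x ≠ 0) (z : E) (ht : 0 < t) (w : ℝ≥0∞) :
    w / ‖x‖ₑ ^ (finrank ℝ E + s) * μ (ball z (t * ‖x‖)) =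
      ENNReal.ofReal t ^ finrank ℝ E * μ (ball 0 1) * (w / ‖x‖ₑ ^ s) := by
  have hx₀ : ‖x‖ₑ ≠ 0 := enorm_ne_zero.2 hx
  have cancel : ‖x‖ₑ ^ finrank ℝ E * (‖x‖ₑ ^ (finrank ℝ E + s))⁻¹ = (‖x‖ₑ ^ s)⁻¹ := by
    rw [← ENNReal.rpow_natCast, ← ENNReal.rpow_neg, ← ENNReal.rpow_add _ _ hx₀ enorm_ne_top,
      ← ENNReal.rpow_neg]
    congr 1
    ring
  rw [Measure.addHaar_ball_of_pos _ _ (by positivity), mul_pow, ENNReal.ofReal_mul (by positivity),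
    ENNReal.ofReal_pow ht.le, ENNReal.ofReal_pow (norm_nonneg x), ofReal_norm, div_eq_mul_inv,
    div_eq_mul_inv, ← cancel]
  ring

lemma mul_enorm_div_rpow_le_lintegral (hu : AEStronglyMeasurable u μ) (hs : 0 ≤ s) (ht : 1 ≤ t)
    {x : E} (hx : x ≠ 0) :
    ENNReal.ofReal t ^ finrank ℝ E * μ (ball 0 1) * (‖u x‖ₑ / ‖x‖ₑ ^ s) ≤
      ENNReal.ofReal (3 * t) ^ (finrank ℝ E + s) *
        (∫⁻ y, ‖u x - u y‖ₑ / ‖x - y‖ₑ ^ (finrank ℝ E + s) ∂μ +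
          ∫⁻ y in {y | t * ‖x‖ < ‖y‖}, ‖u y‖ₑ / ‖y‖ₑ ^ (finrank ℝ E + s) ∂μ) := by
  have ht₀ : 0 < t := by linarith
  set p : ℝ := finrank ℝ E + s
  have hp : 0 ≤ p := by positivity
  have c_ne_top : ENNReal.ofReal (3 * t) ^ p ≠ ∞ :=
    ENNReal.rpow_ne_top_of_nonneg hp ENNReal.ofReal_ne_top
  set B := ball ((2 * t) • x) (t * ‖x‖)
  have hB : B ⊆ {y | t * ‖x‖ < ‖y‖} := fun y hy => mul_norm_lt_norm_of_mem_ball ht₀.le hy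
  calc _ = ∫⁻ _ in B, ‖u x‖ₑ / ‖x‖ₑ ^ p ∂μ := by
        rw [setLIntegral_const, addHaar_ball_mul_norm_div_rpow hx _ ht₀]
    _ ≤ ∫⁻ y in B, ENNReal.ofReal (3 * t) ^ p *
          (‖u x - u y‖ₑ / ‖x - y‖ₑ ^ p + ‖u y‖ₑ / ‖y‖ₑ ^ p) ∂μ :=
        setLIntegral_mono' measurableSet_ball fun y hy => enorm_div_rpow_le_of_mem_ball hp ht hy
    _ = ENNReal.ofReal (3 * t) ^ p * (∫⁻ y in B, ‖u x - u y‖ₑ / ‖x - y‖ₑ ^ p ∂μ +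
          ∫⁻ y in B, ‖u y‖ₑ / ‖y‖ₑ ^ p ∂μ) := by
        rw [lintegral_const_mul' _ _ c_ne_top,
          lintegral_add_right' _ (aemeasurable_enorm_div_enorm_rpow hu p).restrict]
    _ ≤ _ := by
        gcongr
        exact Measure.restrict_le_self

lemma mul_setLIntegral_enorm_div_rpow_le (hu : AEStronglyMeasurable u μ) (hs : 0 ≤ s) (ht : 1 ≤ t)
    {S : Set E} (hS : MeasurableSet S) (hS₀ : 0 ∉ S) :
    ENNReal.ofReal t ^ finrank ℝ E * μ (ball 0 1) * ∫⁻ x in S, ‖u x‖ₑ / ‖x‖ₑ ^ s ∂μ ≤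
      ENNReal.ofReal (3 * t) ^ (finrank ℝ E + s) * (eGagliardo μ s u +
        ∫⁻ x in S, ∫⁻ y in {y | t * ‖x‖ < ‖y‖}, ‖u y‖ₑ / ‖y‖ₑ ^ (finrank ℝ E + s) ∂μ ∂μ) := by
  have c_ne_top : ENNReal.ofReal (3 * t) ^ (finrank ℝ E + s) ≠ ∞ :=
    ENNReal.rpow_ne_top_of_nonneg (by positivity) ENNReal.ofReal_ne_top
  rw [← lintegral_const_mul'' _ (aemeasurable_enorm_div_enorm_rpow hu s).restrict]
  refine (setLIntegral_mono' hS fun x hx => mul_enorm_div_rpow_le_lintegral hu hs ht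
    (ne_of_mem_of_not_mem hx hS₀)).trans ?_
  rw [lintegral_const_mul' _ _ c_ne_top, lintegral_add_left'
    (aemeasurable_gagliardo_quotient hu _).lintegral_prod_right'.restrict]
  gcongr
  exact setLIntegral_le_lintegral _ _

lemma setLIntegral_setLIntegral_norm_lt_le (hu : AEStronglyMeasurable u μ) (ht : 1 ≤ t) {ε : ℝ}
    (hε : 0 ≤ ε) :
    ∫⁻ x in (closedBall 0 ε)ᶜ, ∫⁻ y in {y | t * ‖x‖ < ‖y‖},
        ‖u y‖ₑ / ‖y‖ₑ ^ (finrank ℝ E + s) ∂μ ∂μ ≤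
      ENNReal.ofReal t⁻¹ ^ finrank ℝ E * μ (ball 0 1) *
        ∫⁻ x in (closedBall 0 ε)ᶜ, ‖u x‖ₑ / ‖x‖ₑ ^ s ∂μ := by
  set S : Set E := (closedBall 0 ε)ᶜ
  have hS : MeasurableSet S := measurableSet_closedBall.compl
  have mem_S {x : E} : x ∈ S ↔ ε < ‖x‖ := by simp [S]
  have ht₀ : 0 < t := by linarith
  set f : E → ℝ≥0∞ := fun y => ‖u y‖ₑ / ‖y‖ₑ ^ (finrank ℝ E + s)
  have outward {x : E} (hx : x ∈ S) : {y | t * ‖x‖ < ‖y‖} ⊆ S := fun y hy =>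
    mem_S.2 <| (mem_S.1 hx).trans <| (le_mul_of_one_le_left (norm_nonneg x) ht).trans_lt hy
  calc _ = ∫⁻ x in S, ∫⁻ y in {y | t * ‖x‖ < ‖y‖}, f y ∂μ.restrict S ∂μ := by
        refine setLIntegral_congr_fun hS fun x hx => ?_
        rw [Measure.restrict_restrict_of_subset (outward hx)]
    _ ≤ ∫⁻ x, ∫⁻ y in {y | t * ‖x‖ < ‖y‖}, f y ∂μ.restrict S ∂μ := setLIntegral_le_lintegral _ _
    _ = ∫⁻ y in S, f y * μ (ball 0 (t⁻¹ * ‖y‖)) ∂μ :=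
        lintegral_setLIntegral_norm_lt ht₀ (aemeasurable_enorm_div_enorm_rpow hu _).restrict
    _ = ∫⁻ y in S, ENNReal.ofReal t⁻¹ ^ finrank ℝ E * μ (ball 0 1) * (‖u y‖ₑ / ‖y‖ₑ ^ s) ∂μ :=
        setLIntegral_congr_fun hS fun y hy => addHaar_ball_mul_norm_div_rpow
          (norm_pos_iff.1 (hε.trans_lt (mem_S.1 hy))) _ (inv_pos.2 ht₀) _
    _ = _ := lintegral_const_mul'' _ (aemeasurable_enorm_div_enorm_rpow hu s).restrict

lemma mul_setLIntegral_compl_closedBall_le (hu : Integrable u μ) (hs : 0 ≤ s) (ht : 1 ≤ t)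
    (scale : ENNReal.ofReal (3 * t) ^ (finrank ℝ E + s) * ENNReal.ofReal t⁻¹ ^ finrank ℝ E ≤
      ENNReal.ofReal t ^ finrank ℝ E / 2) {ε : ℝ} (hε : 0 < ε) :
    ENNReal.ofReal t ^ finrank ℝ E * μ (ball 0 1) *
        ∫⁻ x in (closedBall 0 ε)ᶜ, ‖u x‖ₑ / ‖x‖ₑ ^ s ∂μ ≤
      2 * (ENNReal.ofReal (3 * t) ^ (finrank ℝ E + s) * eGagliardo μ s u) := by
  set V := μ (ball 0 1)
  set A := ∫⁻ x in (closedBall 0 ε)ᶜ, ‖u x‖ₑ / ‖x‖ₑ ^ s ∂μ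
  set c := ENNReal.ofReal (3 * t) ^ (finrank ℝ E + s)
  set d := finrank ℝ E
  have A_ne_top : A ≠ ∞ := (setLIntegral_compl_closedBall_enorm_div_rpow_lt_top hu hs hε).ne
  have V_ne_top : V ≠ ∞ := measure_ball_lt_top.ne
  refine le_two_mul_of_le_add_half (ENNReal.mul_ne_top (ENNReal.mul_ne_top (by simp) V_ne_top)
    A_ne_top) ?_
  calc ENNReal.ofReal t ^ d * V * A
      ≤ c * (eGagliardo μ s u + ENNReal.ofReal t⁻¹ ^ d * V * A) := by
        refine (mul_setLIntegral_enorm_div_rpow_le hu.1 hs ht measurableSet_closedBall.compl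
          (by simp [hε.le])).trans ?_
        gcongr
        exact setLIntegral_setLIntegral_norm_lt_le hu.1 ht hε.le
    _ = c * eGagliardo μ s u + c * ENNReal.ofReal t⁻¹ ^ d * (V * A) := by ring
    _ ≤ c * eGagliardo μ s u + ENNReal.ofReal t ^ d / 2 * (V * A) := by gcongr
    _ = c * eGagliardo μ s u + ENNReal.ofReal t ^ d * V * A / 2 := by
        simp only [div_eq_mul_inv]
        ring

theorem exists_lintegral_enorm_div_rpow_le_eGagliardo (μ : Measure E) [μ.IsAddHaarMeasure]
    (hs : 0 ≤ s) (hsd : s < finrank ℝ E) :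
    ∃ C : ℝ≥0, 0 < C ∧ ∀ u : E → F, Integrable u μ →
      ∫⁻ x, ‖u x‖ₑ / ‖x‖ₑ ^ s ∂μ ≤ C * eGagliardo μ s u := by
  have : Nontrivial E := finrank_pos_iff (R := ℝ).1 (by exact_mod_cast hs.trans_lt hsd)
  obtain ⟨t, ht, scale⟩ := exists_one_le_ofReal_rpow_mul_le_half hsd
  have ht₀ : 0 < t := by linarith
  set c := ENNReal.ofReal (3 * t) ^ (finrank ℝ E + s)
  set κ := ENNReal.ofReal t ^ finrank ℝ E * μ (ball 0 1)
  have c_ne_zero : c ≠ 0 := (ENNReal.rpow_pos (by simpa) ENNReal.ofReal_ne_top).ne'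
  have c_ne_top : c ≠ ∞ := ENNReal.rpow_ne_top_of_nonneg (by positivity) ENNReal.ofReal_ne_top
  have κ_ne_zero : κ ≠ 0 := mul_ne_zero (by simp [ht₀]) (measure_ball_pos _ _ one_pos).ne'
  have κ_ne_top : κ ≠ ∞ := ENNReal.mul_ne_top (by simp) measure_ball_lt_top.ne
  have C_ne_top : 2 * c / κ ≠ ∞ :=
    ENNReal.div_ne_top (ENNReal.mul_ne_top ENNReal.ofNat_ne_top c_ne_top) κ_ne_zero
  refine ⟨(2 * c / κ).toNNReal, ENNReal.toNNReal_pos (by simp [c_ne_zero, κ_ne_top]) C_ne_top,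
    fun u hu => ?_⟩
  rw [ENNReal.coe_toNNReal C_ne_top, ← ENNReal.mul_div_right_comm,
    ENNReal.le_div_iff_mul_le (.inl κ_ne_zero) (.inl κ_ne_top), mul_comm _ κ, mul_assoc 2 c]
  refine le_of_tendsto (ENNReal.Tendsto.const_mul (a := κ) (aecover_compl_closedBall
    |>.lintegral_tendsto_of_countably_generated (aemeasurable_enorm_div_enorm_rpow hu.1 s))
    (.inr κ_ne_top)) ?_
  filter_upwards [self_mem_nhdsWithin] with ε hε
  exact mul_setLIntegral_compl_closedBall_le hu hs ht scale hε

end Gagliardo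

section

variable {E F : Type*} [NormedAddCommGroup E] [NormedSpace ℝ E] [NormedAddCommGroup F]
  [NormedSpace ℝ F] {u : E → F}

lemma enorm_add_sub_le_lintegral_fderiv (hu : ContDiff ℝ 1 u) (x h : E) :
    ‖u (x + h) - u x‖ₑ ≤ ‖h‖ₑ * ∫⁻ τ in Icc (0 : ℝ) 1, ‖fderiv ℝ u (x + τ • h)‖ₑ := by
  have hderiv (τ : ℝ) : deriv (fun τ : ℝ => u (x + τ • h)) τ = fderiv ℝ u (x + τ • h) h := by
    have line : HasDerivAt (fun τ : ℝ => x + τ • h) h τ := by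
      simpa using ((hasDerivAt_id τ).smul_const h).const_add x
    exact ((hu.differentiable one_ne_zero _).hasFDerivAt.comp_hasDerivAt τ line).deriv
  calc ‖u (x + h) - u x‖ₑ ≤ ∫⁻ τ in Icc (0 : ℝ) 1, ‖deriv (fun τ : ℝ => u (x + τ • h)) τ‖ₑ := by
        simpa using enorm_sub_le_lintegral_deriv_of_contDiffOn_Icc
          (f := fun τ : ℝ => u (x + τ • h)) (by fun_prop) zero_le_one
    _ ≤ ∫⁻ τ in Icc (0 : ℝ) 1, ‖h‖ₑ * ‖fderiv ℝ u (x + τ • h)‖ₑ := by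
        refine lintegral_mono fun τ => ?_
        rw [hderiv, mul_comm]
        exact ContinuousLinearMap.le_opENorm _ _
    _ = _ := lintegral_const_mul' _ _ enorm_ne_top

end

section Smooth

variable {E F : Type*} [NormedAddCommGroup E] [NormedAddCommGroup F] [MeasurableSpace E]
  [BorelSpace E] {μ : Measure E} [μ.IsAddHaarMeasure] {u : E → F} {s : ℝ}

lemma lintegral_enorm_translate_sub_le_two_mul (hu : AEStronglyMeasurable u μ) (h : E) :
    ∫⁻ x, ‖u (x + h) - u x‖ₑ ∂μ ≤ 2 * ∫⁻ x, ‖u x‖ₑ ∂μ :=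
  calc ∫⁻ x, ‖u (x + h) - u x‖ₑ ∂μ ≤ ∫⁻ x, (‖u (x + h)‖ₑ + ‖u x‖ₑ) ∂μ :=
        lintegral_mono fun _ => enorm_sub_le
    _ = 2 * ∫⁻ x, ‖u x‖ₑ ∂μ := by
        rw [lintegral_add_right' _ hu.enorm, lintegral_add_right_eq_self (fun x => ‖u x‖ₑ) h,
          two_mul]

variable [NormedSpace ℝ E] [FiniteDimensional ℝ E]

lemma integrable_min_norm_one_div_rpow [Nontrivial E] (hs : s ∈ Ioo 0 1) :
    Integrable (fun h : E => min ‖h‖ 1 / ‖h‖ ^ (finrank ℝ E + s)) μ := by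
  refine (integrable_fun_norm_addHaar μ (f := fun r => min r 1 / r ^ (finrank ℝ E + s))).2 ?_
  refine (integrableOn_Ioi_min_one_div_rpow (p := 1 + s) (by linarith [hs.1])
    (by linarith [hs.2])).congr_fun (fun r (hr : 0 < r) => ?_) measurableSet_Ioi
  have split : r ^ (finrank ℝ E + s) = r ^ (finrank ℝ E - 1) * r ^ (1 + s) := by
    rw [← Real.rpow_natCast, ← Real.rpow_add hr, Nat.cast_pred finrank_pos]
    congr 1
    ring
  rw [split, smul_eq_mul]
  field_simp

lemma eGagliardo_eq_lintegral_translate (hu : AEStronglyMeasurable u μ) :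
    eGagliardo μ s u =
      ∫⁻ h, (∫⁻ x, ‖u (x + h) - u x‖ₑ ∂μ) / ‖h‖ₑ ^ (finrank ℝ E + s) ∂μ := by
  have shifted : AEStronglyMeasurable (fun z : E × E => u (z.1 + z.2)) (μ.prod μ) :=
    (hu.comp_snd (μ := μ)).comp_measurePreserving (measurePreserving_prod_add μ μ)
  calc _ = ∫⁻ x, ∫⁻ h, ‖u (x + h) - u x‖ₑ / ‖h‖ₑ ^ (finrank ℝ E + s) ∂μ ∂μ := by
        refine lintegral_congr fun x => ?_
        rw [← lintegral_add_left_eq_self _ x]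
        simp only [sub_add_cancel_left, enorm_neg, enorm_sub_rev (u x)]
    _ = ∫⁻ h, ∫⁻ x, ‖u (x + h) - u x‖ₑ / ‖h‖ₑ ^ (finrank ℝ E + s) ∂μ ∂μ :=
        lintegral_lintegral_swap ((shifted.sub hu.comp_fst).enorm.div (by fun_prop))
    _ = _ := by
        simp only [div_eq_mul_inv]
        refine lintegral_congr fun h => lintegral_mul_const'' _ ?_
        exact ((hu.comp_measurePreserving (measurePreserving_add_right μ h)).sub hu).enorm

variable [NormedSpace ℝ F]

lemma lintegral_enorm_translate_sub_le_mul_fderiv (hu : ContDiff ℝ 1 u) (h : E) :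
    ∫⁻ x, ‖u (x + h) - u x‖ₑ ∂μ ≤ ‖h‖ₑ * ∫⁻ x, ‖fderiv ℝ u x‖ₑ ∂μ := by
  have hcont : Continuous fun z : E × ℝ => ‖fderiv ℝ u (z.1 + z.2 • h)‖ₑ :=
    ((hu.continuous_fderiv one_ne_zero).comp (by fun_prop)).enorm
  calc ∫⁻ x, ‖u (x + h) - u x‖ₑ ∂μ
      ≤ ∫⁻ x, (‖h‖ₑ * ∫⁻ τ in Icc (0 : ℝ) 1, ‖fderiv ℝ u (x + τ • h)‖ₑ) ∂μ :=
        lintegral_mono fun x => enorm_add_sub_le_lintegral_fderiv hu x h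
    _ = ‖h‖ₑ * ∫⁻ τ in Icc (0 : ℝ) 1, (∫⁻ x, ‖fderiv ℝ u (x + τ • h)‖ₑ ∂μ) := by
        rw [lintegral_const_mul' _ _ enorm_ne_top,
          lintegral_lintegral_swap hcont.measurable.aemeasurable]
    _ = ‖h‖ₑ * ∫⁻ x, ‖fderiv ℝ u x‖ₑ ∂μ := by
        simp [lintegral_add_right_eq_self fun x => ‖fderiv ℝ u x‖ₑ]

theorem eGagliardo_lt_top_of_contDiff (hs : s ∈ Ioo 0 1) (hu : ContDiff ℝ 1 u)
    (hu_int : Integrable u μ) (hfderiv_int : Integrable (fderiv ℝ u) μ) :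
    eGagliardo μ s u < ∞ := by
  rcases subsingleton_or_nontrivial E with _ | _
  · simp [eGagliardo, Subsingleton.elim _ (0 : E)]
  set M := ∫⁻ x, ‖fderiv ℝ u x‖ₑ ∂μ + 2 * ∫⁻ x, ‖u x‖ₑ ∂μ
  have M_ne_top : M ≠ ∞ := ENNReal.add_ne_top.2
    ⟨hfderiv_int.2.ne, ENNReal.mul_ne_top ENNReal.ofNat_ne_top hu_int.2.ne⟩
  have modulus (h : E) : ∫⁻ x, ‖u (x + h) - u x‖ₑ ∂μ ≤ M * ‖min ‖h‖ 1‖ₑ := by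
    rcases le_total ‖h‖ 1 with hh | hh
    · rw [min_eq_left hh, enorm_norm, mul_comm]
      exact (lintegral_enorm_translate_sub_le_mul_fderiv hu h).trans (by gcongr; exact le_self_add)
    · rw [min_eq_right hh, enorm_one, mul_one]
      exact (lintegral_enorm_translate_sub_le_two_mul hu_int.1 h).trans le_add_self
  rw [eGagliardo_eq_lintegral_translate hu_int.1]
  calc _ ≤ ∫⁻ h, M * ‖min ‖h‖ 1 / ‖h‖ ^ (finrank ℝ E + s)‖ₑ ∂μ := by
        refine lintegral_mono fun h => ?_
        rw [enorm_div_norm_rpow _ fun hh => by simp [hh], ← mul_div_assoc]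
        gcongr
        exact modulus h
    _ = M * ∫⁻ h, ‖min ‖h‖ 1 / ‖h‖ ^ (finrank ℝ E + s)‖ₑ ∂μ := lintegral_const_mul' _ _ M_ne_top
    _ < ∞ := ENNReal.mul_lt_top M_ne_top.lt_top (integrable_min_norm_one_div_rpow hs).2

theorem eGagliardo_lt_top_of_schwartz (u : 𝓢(E, F)) (hs : s ∈ Ioo 0 1) :
    eGagliardo μ s u < ∞ :=
  eGagliardo_lt_top_of_contDiff hs (u.smooth 1) u.integrable
    (SchwartzMap.fderivCLM ℝ E F u).integrable

end Smooth

theorem stmt16_general {E F : Type*} [NormedAddCommGroup E] [NormedSpace ℝ E]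
    [FiniteDimensional ℝ E] [MeasurableSpace E] [BorelSpace E] [NormedAddCommGroup F]
    (μ : Measure E) [μ.IsAddHaarMeasure] {s : ℝ} (hs : 0 ≤ s) (hsd : s < finrank ℝ E) :
    ∃ C > (0 : ℝ), ∀ u : E → F, Integrable u μ →
      Integrable (fun z : E × E => ‖u z.1 - u z.2‖ / ‖z.1 - z.2‖ ^ (finrank ℝ E + s))
        (μ.prod μ) →
      Integrable (fun x => ‖x‖ ^ (-s) * ‖u x‖) μ ∧
        ∫ x, ‖x‖ ^ (-s) * ‖u x‖ ∂μ ≤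
          C * ∫ x, ∫ y, ‖u x - u y‖ / ‖x - y‖ ^ (finrank ℝ E + s) ∂μ ∂μ := by
  have : Nontrivial E := finrank_pos_iff (R := ℝ).1 (by exact_mod_cast hs.trans_lt hsd)
  obtain ⟨C, hC, hardy⟩ := exists_lintegral_enorm_div_rpow_le_eGagliardo (F := F) μ hs hsd
  refine ⟨C, hC, fun u hu hG => ?_⟩
  have weight_meas : Measurable fun x : E => ‖x‖ ^ (-s) := by fun_prop
  rw [← integral_prod _ hG]
  refine integral_le_mul_of_lintegral_enorm_le (weight_meas.aestronglyMeasurable.mul hu.1.norm) hG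
    (fun _ => by positivity) (fun _ => by positivity) ?_
  rw [lintegral_enorm_rpow_neg_mul_norm, lintegral_enorm_gagliardo_quotient hu.1]
  exact hardy u hu

/-- the endpoint fractional Hardy inequality
`∫ |x|^{−s}|u(x)| dx ≤ C [u]_{W^{s,1}}` for Schwartz functions on `ℝⁿ`, `n ≥ 2`. -/
theorem stmt16 (n : ℕ) (hn : 2 ≤ n) (s : ℝ) (hs : s ∈ Set.Ioo (0:ℝ) 1) :
    ∃ C > (0:ℝ), ∀ u : SchwartzMap (EuclideanSpace ℝ (Fin n)) ℝ,
      ∫ x, ‖x‖ ^ (-s) * |u x| ≤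
        C * ∫ x, ∫ y, |u x - u y| / ‖x - y‖ ^ ((n:ℝ) + s) := by
  have hsn : s < finrank ℝ (EuclideanSpace ℝ (Fin n)) := by
    rw [finrank_euclideanSpace_fin]
    exact hs.2.trans (by exact_mod_cast hn)
  obtain ⟨C, hC, hardy⟩ := stmt16_general (F := ℝ) volume hs.1.le hsn
  refine ⟨C, hC, fun u => ?_⟩
  have hG := (integrable_gagliardo_quotient_iff u.integrable.1).2
    (eGagliardo_lt_top_of_schwartz (μ := volume) u hs)
  simpa using (hardy u u.integrable hG).2
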